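/- Let $\vec{P}=(p_1,p_2)$ with $1<p_1,p_2<\infty$, $1/p=1/p_1+1/p_2$ and $1<p<\infty$, and let $\vec{w}=(w_1,w_2)\in A_{\vec{P}}$. Then there is a constant $C$ depending only on $n$ and $\vec{P}$ such that for every sparse family $\mathcal{S}$ of cubes, $\Big\|\sum_{Q\in\mathcal{S}}\langle\sigma_1\rangle_Q\langle v_{\vec{w}}\rangle_Q\chi_Q\Big\|_{L^{p_2'}(\sigma_2)}\ \le\ C\,[\vec{w}]_{A_{\vec{P}}}^{1/p}\Big(\sum_{Q\in\mathcal{S}}\langle\sigma_1\rangle_Q^{p_2'/p_1}\langle v_{\vec{w}}\rangle_Q^{p_2'/p'}|Q|\Big)^{1/p_2'}$, where $p'$ and $p_2'$ are the conjugate exponents of $p$ and $p_2$. -/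

import Mathlib

open MeasureTheory Set ENNReal

noncomputable section

/-- Euclidean space `ℝⁿ`. -/
abbrev Rn (n : ℕ) := Fin n → ℝ

/-- `Q` is an axis-parallel (half-open) cube of sidelength `h`. -/
def HasSide {n : ℕ} (Q : Set (Rn n)) (h : ℝ) : Prop :=
  ∃ c : Rn n, Q = {x | ∀ i, c i ≤ x i ∧ x i < c i + h}

/-- `Q` is an axis-parallel cube (with positive sidelength). -/
def IsCube {n : ℕ} (Q : Set (Rn n)) : Prop :=
  ∃ h : ℝ, 0 < h ∧ HasSide Q h

/-- A dyadic cubes system: cubes of sidelengths `2^k`, pairwise nested or disjoint,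
and for each fixed `k` the cubes of sidelength `2^k` cover (hence partition) `ℝⁿ`. -/
def IsDyadicSystem {n : ℕ} (D : Set (Set (Rn n))) : Prop :=
  (∀ Q ∈ D, ∃ k : ℤ, HasSide Q ((2 : ℝ) ^ k)) ∧
  (∀ Q ∈ D, ∀ R ∈ D, Q ∩ R = Q ∨ Q ∩ R = R ∨ Q ∩ R = ∅) ∧
  (∀ k : ℤ, ∀ x : Rn n, ∃ Q ∈ D, HasSide Q ((2 : ℝ) ^ k) ∧ x ∈ Q)

/-- A sparse family: each `Q` carries a measurable subset `E Q ⊆ Q` with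
`|E Q| ≥ |Q|/2`, the sets `E Q` being pairwise disjoint. -/
def IsSparse {n : ℕ} (S : Set (Set (Rn n))) : Prop :=
  ∃ E : Set (Rn n) → Set (Rn n),
    (∀ Q ∈ S, E Q ⊆ Q ∧ MeasurableSet (E Q) ∧ volume Q ≤ 2 * volume (E Q)) ∧
    S.Pairwise fun Q R => Disjoint (E Q) (E R)

/-- A weight: a measurable nonnegative (`ℝ≥0∞`-valued) locally integrable function. -/
def IsWeight {n : ℕ} (w : Rn n → ℝ≥0∞) : Prop :=
  Measurable w ∧ ∀ Q : Set (Rn n), IsCube Q → (∫⁻ x in Q, w x) ≠ ∞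

/-- `w(Q) = ∫_Q w`. -/
def mass {n : ℕ} (w : Rn n → ℝ≥0∞) (Q : Set (Rn n)) : ℝ≥0∞ := ∫⁻ x in Q, w x

/-- `⟨w⟩_Q = w(Q)/|Q|`. -/
def avg {n : ℕ} (w : Rn n → ℝ≥0∞) (Q : Set (Rn n)) : ℝ≥0∞ := mass w Q / volume Q

/-- The conjugate exponent `q' = q/(q-1)`. -/
def conj (q : ℝ) : ℝ := q / (q - 1)

/-- The product weight `v_w = w₁^{p/p₁} w₂^{p/p₂}`. -/
def vweight {n : ℕ} (p p1 p2 : ℝ) (w1 w2 : Rn n → ℝ≥0∞) : Rn n → ℝ≥0∞ :=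
  fun x => w1 x ^ (p / p1) * w2 x ^ (p / p2)

/-- The dual weight `σ = w^{1-q'}`. -/
def dualW {n : ℕ} (q : ℝ) (w : Rn n → ℝ≥0∞) : Rn n → ℝ≥0∞ :=
  fun x => w x ^ (1 - conj q)

/-- The multilinear `A_{\vec P}` constant
`[\vec w]_{A_{\vec P}} = sup_Q ⟨v_w⟩_Q ⟨σ₁⟩_Q^{p/p₁'} ⟨σ₂⟩_Q^{p/p₂'}`. -/
def APconst {n : ℕ} (p p1 p2 : ℝ) (w1 w2 : Rn n → ℝ≥0∞) : ℝ≥0∞ :=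
  ⨆ (Q : Set (Rn n)) (_ : IsCube Q),
    avg (vweight p p1 p2 w1 w2) Q * avg (dualW p1 w1) Q ^ (p / conj p1) *
      avg (dualW p2 w2) Q ^ (p / conj p2)

/-- The (linear) `A_q` constant `[w]_{A_q} = sup_Q ⟨w⟩_Q ⟨w^{1-q'}⟩_Q^{q-1}`. -/
def AqConst {n : ℕ} (q : ℝ) (w : Rn n → ℝ≥0∞) : ℝ≥0∞ :=
  ⨆ (Q : Set (Rn n)) (_ : IsCube Q),
    avg w Q * avg (fun x => w x ^ (1 - conj q)) Q ^ (q - 1)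

/-- The Hardy–Littlewood maximal operator (over axis-parallel cubes). -/
def HLMax {n : ℕ} (w : Rn n → ℝ≥0∞) (x : Rn n) : ℝ≥0∞ :=
  ⨆ (Q : Set (Rn n)) (_ : IsCube Q) (_ : x ∈ Q), avg w Q

/-- The Fujii–Wilson `A_∞` constant `[w]_{A_∞} = sup_Q w(Q)⁻¹ ∫_Q M(wχ_Q)`. -/
def AinfConst {n : ℕ} (w : Rn n → ℝ≥0∞) : ℝ≥0∞ :=
  ⨆ (Q : Set (Rn n)) (_ : IsCube Q), (∫⁻ x in Q, HLMax (Q.indicator w) x) / mass w Q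

/-- `‖g‖_{L^p(v)}` for an `ℝ≥0∞`-valued function. -/
def lpNorm {n : ℕ} (g : Rn n → ℝ≥0∞) (p : ℝ) (v : Rn n → ℝ≥0∞) : ℝ≥0∞ :=
  (∫⁻ x, g x ^ p * v x) ^ (1 / p)

/-- `‖g‖_{L^{p,∞}(v)} = sup_{t>0} t · v({g > t})^{1/p}`. -/
def wkNorm {n : ℕ} (g : Rn n → ℝ≥0∞) (p : ℝ) (v : Rn n → ℝ≥0∞) : ℝ≥0∞ :=
  ⨆ t : ℝ≥0∞, t * mass v {x | t < g x} ^ (1 / p)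

/-- The pointwise `ℝ≥0∞`-valued absolute value of a real function. -/
def eAbs {n : ℕ} (f : Rn n → ℝ) : Rn n → ℝ≥0∞ := fun x => (‖f x‖₊ : ℝ≥0∞)

/-- `f ∈ L^p(v)`. -/
def MemLpW {n : ℕ} (f : Rn n → ℝ) (p : ℝ) (v : Rn n → ℝ≥0∞) : Prop :=
  Measurable f ∧ lpNorm (eAbs f) p v ≠ ∞

/-- The bilinear sparse operator `A_{D,S}(g₁,g₂) = ∑_{Q∈S} ⟨g₁⟩_Q ⟨g₂⟩_Q χ_Q`. -/
def sparseOp {n : ℕ} (S : Set (Set (Rn n))) (g1 g2 : Rn n → ℝ≥0∞) (x : Rn n) : ℝ≥0∞ :=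
  ∑' Q : S, Set.indicator (Q : Set (Rn n)) (fun _ => avg g1 Q * avg g2 Q) x

/-- The weighted average `⟨f⟩_Q^w = (∫_Q |f| w)/w(Q)`. -/
def wAvg {n : ℕ} (f : Rn n → ℝ) (w : Rn n → ℝ≥0∞) (Q : Set (Rn n)) : ℝ≥0∞ :=
  (∫⁻ x in Q, (‖f x‖₊ : ℝ≥0∞) * w x) / mass w Q


/-- The exponent `β = 1/p + max{min{1/p₁', (1/p₁')(p₂'/p)}, min{1/p₂', (1/p₂')(p₁'/p)}}`. -/
def betaExp (p p1 p2 : ℝ) : ℝ :=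
  1 / p + max (min (1 / conj p1) (1 / conj p1 * (conj p2 / p)))
              (min (1 / conj p2) (1 / conj p2 * (conj p1 / p)))

/-- The exponent `γ = max{1, p₁'/p, p₂'/p}`. -/
def gammaExp (p p1 p2 : ℝ) : ℝ := max 1 (max (conj p1 / p) (conj p2 / p))

end

/-!
Let `X`, `V`, `Y` be the averages of `σ₁`, `v`, `σ₂` over a cube, `q = p₂'` and `B = [w]^{1/p}`. The
weight condition reads `X^{e₁} V^{e₂} Y^{e₃} ≤ B` with `(e₁, e₂, e₃) = (1/p₁', 1/p, 1/p₂')`,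
exponents in `(0, 1)` of sum `2`.

A discrete Wolff-type bound for laminar families controls the `q`-th power of the norm by
`∑ a_Q σ₂(Q) (σ₂(Q)⁻¹ ∑_{R ⊆ Q} a_R σ₂(R))^{q-1}` with `a = X V`; it follows from
`(∑ a_i)^r ≤ r ∑ a_i (a_1 + ⋯ + a_i)^{r-1}` along the chain of cubes containing a point, by Jensen's
inequality if `q ≤ 2` and by Young's inequality and absorption if `q ≥ 2`.

To estimate the inner sum, choose `τ > 1` with `τ eᵢ < 1` for all `i`. Raising the condition to the
power `τ` gives `X V Y ≤ B^τ X^{1-τe₁} V^{1-τe₂} Y^{1-τe₃}`, where the exponents on the right have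
sum `3 - 2τ < 1`. For such exponents Hölder's inequality and Kolmogorov's inequality for the sparse
family bound the sum over `R ⊆ Q` by a multiple of the value at `Q`. The condition raised to the
power `q - τ(q - 1)` then eliminates `Y` from the outer sum.
-/

theorem add_rpow_le_rpow_add_mul_real {r y a : ℝ} (hr : 1 ≤ r) (hy : 0 ≤ y) (ha : 0 < a) :
    (y + a) ^ r ≤ y ^ r + r * (a * (y + a) ^ (r - 1)) := by
  have hz : 0 < y + a := by positivity
  have bernoulli := one_add_mul_self_le_rpow_one_add (s := -(a / (y + a)))
    (neg_le_neg ((div_le_one hz).2 (by linarith))) hr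
  rw [show 1 + -(a / (y + a)) = y / (y + a) by field_simp; ring, Real.div_rpow hy hz.le,
    le_div_iff₀ (by positivity)] at bernoulli
  rw [Real.rpow_sub_one hz.ne']
  linear_combination bernoulli

theorem rpow_add_mul_le_add_rpow_real {r y a : ℝ} (hr₀ : 0 ≤ r) (hr : r ≤ 1) (hy : 0 ≤ y)
    (ha : 0 < a) : y ^ r + r * (a * (y + a) ^ (r - 1)) ≤ (y + a) ^ r := by
  have hz : 0 < y + a := by positivity
  have bernoulli := rpow_one_add_le_one_add_mul_self (s := -(a / (y + a)))
    (neg_le_neg ((div_le_one hz).2 (by linarith))) hr₀ hr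
  rw [show 1 + -(a / (y + a)) = y / (y + a) by field_simp; ring, Real.div_rpow hy hz.le,
    div_le_iff₀ (by positivity)] at bernoulli
  rw [Real.rpow_sub_one hz.ne']
  linear_combination bernoulli

theorem ofReal_rpow_add_mul {r y a : ℝ} (hr : 0 ≤ r) (hy : 0 ≤ y) (ha : 0 < a) :
    ENNReal.ofReal (y ^ r + r * (a * (y + a) ^ (r - 1))) =
      ENNReal.ofReal y ^ r +
        ENNReal.ofReal r * (ENNReal.ofReal a * ENNReal.ofReal (y + a) ^ (r - 1)) := by
  rw [ENNReal.ofReal_add (by positivity) (by positivity), ENNReal.ofReal_mul hr,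
    ENNReal.ofReal_mul ha.le, ENNReal.ofReal_rpow_of_nonneg hy hr,
    ENNReal.ofReal_rpow_of_pos (by positivity)]

theorem add_rpow_le_rpow_add_mul {r : ℝ} (hr : 1 ≤ r) (y a : ℝ≥0∞) :
    (y + a) ^ r ≤ y ^ r + ENNReal.ofReal r * (a * (y + a) ^ (r - 1)) := by
  rcases eq_or_ne a 0 with rfl | ha₀
  · simp
  rcases hr.eq_or_lt with rfl | hr₁
  · simp
  rcases eq_or_ne (y + a) ∞ with h | h
  · simp [h, ENNReal.top_rpow_of_pos (sub_pos.2 hr₁), ENNReal.mul_top ha₀,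
      ENNReal.mul_top (ENNReal.ofReal_pos.2 (zero_lt_one.trans hr₁)).ne']
  obtain ⟨hy, ha⟩ := ENNReal.add_ne_top.1 h
  have ha_pos := ENNReal.toReal_pos ha₀ ha
  have hy₀ := y.toReal_nonneg
  have key := ENNReal.ofReal_le_ofReal (add_rpow_le_rpow_add_mul_real hr hy₀ ha_pos)
  rwa [ofReal_rpow_add_mul (by positivity) hy₀ ha_pos, ← ENNReal.ofReal_rpow_of_pos (by positivity),
    ENNReal.ofReal_add hy₀ ha_pos.le, ENNReal.ofReal_toReal hy, ENNReal.ofReal_toReal ha] at key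

theorem rpow_add_mul_le_add_rpow {r : ℝ} (hr₀ : 0 < r) (hr : r ≤ 1) (y a : ℝ≥0∞) :
    y ^ r + ENNReal.ofReal r * (a * (y + a) ^ (r - 1)) ≤ (y + a) ^ r := by
  rcases eq_or_ne a 0 with rfl | ha₀
  · simp
  rcases eq_or_ne (y + a) ∞ with h | h
  · simp [h, ENNReal.top_rpow_of_pos hr₀]
  obtain ⟨hy, ha⟩ := ENNReal.add_ne_top.1 h
  have ha_pos := ENNReal.toReal_pos ha₀ ha
  have hy₀ := y.toReal_nonneg
  have key := ENNReal.ofReal_le_ofReal (rpow_add_mul_le_add_rpow_real hr₀.le hr hy₀ ha_pos)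
  rwa [ofReal_rpow_add_mul hr₀.le hy₀ ha_pos, ← ENNReal.ofReal_rpow_of_pos (by positivity),
    ENNReal.ofReal_add hy₀ ha_pos.le, ENNReal.ofReal_toReal hy, ENNReal.ofReal_toReal ha] at key

theorem rpow_sub_one_mul_le_young {r : ℝ} (hr : 1 < r) (u x : ℝ≥0∞) :
    u ^ (r - 1) * x ≤
      (ENNReal.ofReal (Real.conjExponent r))⁻¹ * u ^ r + (ENNReal.ofReal r)⁻¹ * x ^ r := by
  convert ENNReal.young_inequality (u ^ (r - 1)) x (Real.HolderConjugate.conjExponent hr).symm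
    using 1
  rw [← ENNReal.rpow_mul, Real.conjExponent, mul_div_cancel₀ _ (sub_pos.2 hr).ne',
    ENNReal.div_eq_inv_mul, ENNReal.div_eq_inv_mul]

theorem sum_mul_rpow_le_of_le_sum_mul_rpow_sub_one_mul {ι : Type*} {s : Finset ι}
    {w u m : ι → ℝ≥0∞} {r : ℝ} (hr : 1 ≤ r) {c : ℝ≥0∞} (hw : ∀ i ∈ s, w i ≠ ∞)
    (hu : ∀ i ∈ s, u i ≠ ∞)
    (h : ∑ i ∈ s, w i * u i ^ r ≤ c * ∑ i ∈ s, w i * u i ^ (r - 1) * m i) :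
    ∑ i ∈ s, w i * u i ^ r ≤ c ^ r * ∑ i ∈ s, w i * m i ^ r := by
  rcases hr.eq_or_lt with rfl | hr₁
  · simpa using h
  set Y := ∑ i ∈ s, w i * u i ^ r
  set Z := ∑ i ∈ s, w i * m i ^ r
  set η := (ENNReal.ofReal (Real.conjExponent r))⁻¹
  set θ := (ENNReal.ofReal r)⁻¹
  have hηθ : η + θ = 1 := (Real.HolderConjugate.conjExponent hr₁).symm.inv_add_inv_ennreal
  have young (i : ι) : u i ^ (r - 1) * (c * m i) ≤ η * u i ^ r + θ * (c ^ r * m i ^ r) := by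
    rw [← ENNReal.mul_rpow_of_nonneg _ _ (by positivity)]
    exact rpow_sub_one_mul_le_young hr₁ _ _
  have hηY : η * Y ≠ ∞ := ENNReal.mul_ne_top (ne_top_of_le_ne_top one_ne_top (hηθ ▸ le_self_add))
    (ENNReal.sum_ne_top.2 fun i hi =>
      ENNReal.mul_ne_top (hw i hi) (ENNReal.rpow_ne_top_of_nonneg (by positivity) (hu i hi)))
  have absorb : η * Y + θ * Y ≤ η * Y + θ * (c ^ r * Z) := calc
    η * Y + θ * Y = Y := by rw [← add_mul, hηθ, one_mul]
    _ ≤ c * ∑ i ∈ s, w i * u i ^ (r - 1) * m i := h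
    _ = ∑ i ∈ s, w i * (u i ^ (r - 1) * (c * m i)) := by
      rw [Finset.mul_sum]
      exact Finset.sum_congr rfl fun i _ => by ring
    _ ≤ ∑ i ∈ s, w i * (η * u i ^ r + θ * (c ^ r * m i ^ r)) := by gcongr with i; exact young i
    _ = η * Y + θ * (c ^ r * Z) := by
      simp only [Y, Z, Finset.mul_sum, mul_add, Finset.sum_add_distrib, mul_left_comm (w _)]
  exact (ENNReal.mul_le_mul_iff_right (ENNReal.inv_ne_zero.2 ENNReal.ofReal_ne_top)
    (ENNReal.inv_ne_top.2 (ENNReal.ofReal_pos.2 (by positivity)).ne')).1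
    ((ENNReal.add_le_add_iff_left hηY).1 absorb)

section Laminar

section Chain

variable {ι : Type*} [PartialOrder ι] [DecidableLE ι] {G : Finset ι}

theorem rpow_sum_le_of_isChain (hG : IsChain (· ≤ ·) (G : Set ι)) {r : ℝ} (hr : 1 ≤ r)
    (a : ι → ℝ≥0∞) :
    (∑ i ∈ G, a i) ^ r ≤
      ENNReal.ofReal r * ∑ i ∈ G, a i * (∑ j ∈ G with j ≤ i, a j) ^ (r - 1) := by
  classical
  induction G using Finset.strongInduction with
  | H G ih =>
    rcases G.eq_empty_or_nonempty with rfl | hne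
    · simp [zero_lt_one.trans_le hr]
    obtain ⟨m, hm⟩ := G.exists_maximal hne
    have le_m : ∀ i ∈ G, i ≤ m := fun i hi => (hG.total hi hm.1).elim id (hm.2 hi)
    rw [← Finset.sum_erase_add G _ hm.1, ← Finset.sum_erase_add G (fun i => a i * _) hm.1,
      mul_add, Finset.filter_true_of_mem le_m, ← Finset.sum_erase_add G _ hm.1]
    refine (add_rpow_le_rpow_add_mul hr _ _).trans (add_le_add_left ?_ _)
    refine (ih _ (Finset.erase_ssubset hm.1) (hG.mono (by simp))).trans ?_
    gcongr
    exact Finset.erase_subset _ _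

theorem rpow_sum_le_of_isChain_dual (hG : IsChain (· ≤ ·) (G : Set ι)) {r : ℝ} (hr : 1 ≤ r)
    (a : ι → ℝ≥0∞) :
    (∑ i ∈ G, a i) ^ r ≤
      ENNReal.ofReal r * ∑ i ∈ G, a i * (∑ j ∈ G with i ≤ j, a j) ^ (r - 1) :=
  rpow_sum_le_of_isChain (ι := ιᵒᵈ) hG.symm hr a

end Chain

variable {α : Type*}

/-- A laminar family of sets: any two members are nested or disjoint. -/
def IsLaminar (S : Set (Set α)) : Prop :=
  ∀ Q ∈ S, ∀ R ∈ S, Q ⊆ R ∨ R ⊆ Q ∨ Disjoint Q R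

theorem IsLaminar.mono {S T : Set (Set α)} (hT : IsLaminar T) (hST : S ⊆ T) : IsLaminar S :=
  fun Q hQ R hR => hT Q (hST hQ) R (hST hR)

theorem IsLaminar.isChain_of_mem {S : Set (Set α)} (hS : IsLaminar S) (x : α) :
    IsChain (· ≤ ·) {Q ∈ S | x ∈ Q} := by
  rintro Q ⟨hQ, hxQ⟩ R ⟨hR, hxR⟩ -
  have := hS Q hQ R hR
  have := Set.not_disjoint_iff.2 ⟨x, hxQ, hxR⟩
  tauto

theorem IsLaminar.isChain_supersets {S : Set (Set α)} (hS : IsLaminar S) {R : Set α}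
    (hR : R.Nonempty) : IsChain (· ≤ ·) {Q ∈ S | R ⊆ Q} :=
  (hS.isChain_of_mem hR.some).mono fun _ hQ => And.intro hQ.1 (hQ.2 hR.some_mem)

section CarlesonSum

variable [MeasurableSpace α] {σ : Measure α} {F : Finset (Set α)} {a : Set α → ℝ≥0∞}

open Classical in
/-- The average over `Q` of the part of `∑ a R 1_R` carried by the members `R ⊆ Q` of `F`, with
respect to `σ`; it is the quantity controlling `∑ a R 1_R` in the discrete Wolff-type bound
`lintegral_rpow_sum_indicator_le`. -/
noncomputable def localAverage (σ : Measure α) (F : Finset (Set α)) (a : Set α → ℝ≥0∞)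
    (Q : Set α) : ℝ≥0∞ :=
  (∑ R ∈ F with R ⊆ Q, a R * σ R) / σ Q

open Classical in
theorem mul_localAverage {Q : Set α} (hQ : σ Q ≠ ∞) :
    σ Q * localAverage σ F a Q = ∑ R ∈ F with R ⊆ Q, a R * σ R := by
  refine ENNReal.mul_div_cancel' (fun h => Finset.sum_eq_zero fun R hR => ?_) (absurd · hQ)
  rw [measure_mono_null (Finset.mem_filter.1 hR).2 h, mul_zero]

theorem lintegral_sum_indicator_const (hm : ∀ Q ∈ F, MeasurableSet Q) :
    ∫⁻ x, ∑ Q ∈ F, Q.indicator (fun _ => a Q) x ∂σ = ∑ Q ∈ F, a Q * σ Q := by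
  rw [lintegral_finsetSum _ fun Q hQ => measurable_const.indicator (hm Q hQ)]
  exact Finset.sum_congr rfl fun Q hQ => lintegral_indicator_const (hm Q hQ) _

theorem lintegral_rpow_le_measure_mul_rpow {r : ℝ} (hr₀ : 0 ≤ r) (hr : r ≤ 1)
    (hσ : σ univ ≠ ∞) {f : α → ℝ≥0∞} (hf : AEMeasurable f σ) :
    ∫⁻ x, f x ^ r ∂σ ≤ σ univ * ((∫⁻ x, f x ∂σ) / σ univ) ^ r := by
  rcases eq_or_ne (σ univ) 0 with h | h
  · simp [Measure.measure_univ_eq_zero.1 h]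
  have holder := ENNReal.lintegral_mul_norm_pow_le hf (aemeasurable_const (b := (1 : ℝ≥0∞)))
    hr₀ (sub_nonneg.2 hr) (add_sub_cancel r 1)
  simp only [ENNReal.one_rpow, mul_one, lintegral_one] at holder
  rw [ENNReal.div_rpow_of_nonneg _ _ hr₀]
  refine holder.trans_eq ?_
  rw [ENNReal.rpow_sub _ _ h hσ, ENNReal.rpow_one, div_eq_mul_inv, div_eq_mul_inv]
  ring

open Classical in
theorem IsLaminar.lintegral_rpow_le_sum_setLIntegral (hF : IsLaminar (F : Set (Set α)))
    (hm : ∀ Q ∈ F, MeasurableSet Q) {q : ℝ} (hq : 1 ≤ q) :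
    ∫⁻ x, (∑ Q ∈ F, Q.indicator (fun _ => a Q) x) ^ q ∂σ ≤
      ENNReal.ofReal q * ∑ Q ∈ F, a Q *
        ∫⁻ x in Q, (∑ R ∈ F with R ⊆ Q, R.indicator (fun _ => a R) x) ^ (q - 1) ∂σ := by
  have hmeas (Q : Set α) : Measurable fun x =>
      (∑ R ∈ F with R ⊆ Q, R.indicator (fun _ => a R) x) ^ (q - 1) :=
    (Finset.measurable_sum _ fun R hR =>
      measurable_const.indicator (hm R (Finset.mem_filter.1 hR).1)).pow_const _
  calc ∫⁻ x, (∑ Q ∈ F, Q.indicator (fun _ => a Q) x) ^ q ∂σ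
      ≤ ∫⁻ x, ENNReal.ofReal q * ∑ Q ∈ F, a Q * Q.indicator (fun x =>
          (∑ R ∈ F with R ⊆ Q, R.indicator (fun _ => a R) x) ^ (q - 1)) x ∂σ := by
        refine lintegral_mono fun x => ?_
        simp only [Set.indicator_apply, mul_ite, mul_zero,
          ← Finset.sum_filter, Finset.filter_filter]
        refine (rpow_sum_le_of_isChain (by simpa using hF.isChain_of_mem x) hq a).trans_eq ?_
        simp only [Finset.filter_filter, and_comm]
    _ = _ := by
        rw [lintegral_const_mul' _ _ ENNReal.ofReal_ne_top, lintegral_finsetSum _ fun Q hQ =>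
          ((hmeas Q).indicator (hm Q hQ)).const_mul _]
        congr! 2 with Q hQ
        rw [lintegral_const_mul _ ((hmeas Q).indicator (hm Q hQ)), lintegral_indicator (hm Q hQ)]

theorem IsLaminar.lintegral_rpow_le_of_le_two (hF : IsLaminar (F : Set (Set α)))
    (hm : ∀ Q ∈ F, MeasurableSet Q) (hσ : ∀ Q ∈ F, σ Q ≠ ∞) {q : ℝ} (hq : 1 ≤ q) (hq₂ : q ≤ 2) :
    ∫⁻ x, (∑ Q ∈ F, Q.indicator (fun _ => a Q) x) ^ q ∂σ ≤
      ENNReal.ofReal q * ∑ Q ∈ F, a Q * σ Q * localAverage σ F a Q ^ (q - 1) := by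
  classical
  refine (hF.lintegral_rpow_le_sum_setLIntegral hm hq).trans ?_
  refine mul_le_mul_right (Finset.sum_le_sum fun Q hQ => ?_) _
  have hm' : ∀ R ∈ F.filter (· ⊆ Q), MeasurableSet R := fun R hR => hm R (Finset.mem_filter.1 hR).1
  rw [mul_assoc]
  gcongr
  refine (lintegral_rpow_le_measure_mul_rpow (sub_nonneg.2 hq) (by linarith)
    (by simpa using hσ Q hQ) (Finset.measurable_sum _ fun R hR =>
      measurable_const.indicator (hm' R hR)).aemeasurable).trans ?_
  rw [lintegral_sum_indicator_const hm', Measure.restrict_apply_univ, localAverage]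
  gcongr
  exact Measure.restrict_le_self

open Classical in
theorem IsLaminar.lintegral_rpow_le_sum_rpow_supersets (hF : IsLaminar (F : Set (Set α)))
    (hm : ∀ Q ∈ F, MeasurableSet Q) {q : ℝ} (hq : 1 ≤ q) :
    ∫⁻ x, (∑ Q ∈ F, Q.indicator (fun _ => a Q) x) ^ q ∂σ ≤
      ENNReal.ofReal q * ∑ Q ∈ F, a Q * σ Q * (∑ R ∈ F with Q ⊆ R, a R) ^ (q - 1) := by
  calc ∫⁻ x, (∑ Q ∈ F, Q.indicator (fun _ => a Q) x) ^ q ∂σ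
      ≤ ∫⁻ x, ENNReal.ofReal q *
          ∑ Q ∈ F, Q.indicator (fun _ => a Q * (∑ R ∈ F with Q ⊆ R, a R) ^ (q - 1)) x ∂σ := by
        refine lintegral_mono fun x => ?_
        simp only [Set.indicator_apply, ← Finset.sum_filter]
        refine (rpow_sum_le_of_isChain_dual (by simpa using hF.isChain_of_mem x) hq a).trans ?_
        gcongr
        exact Finset.filter_subset _ _
    _ = _ := by
        rw [lintegral_const_mul' _ _ ENNReal.ofReal_ne_top, lintegral_sum_indicator_const hm]
        simp only [mul_right_comm]

open Classical in
theorem IsLaminar.sum_mul_rpow_supersets_le (hF : IsLaminar (F : Set (Set α)))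
    (hσ : ∀ Q ∈ F, σ Q ≠ ∞) {r : ℝ} (hr : 1 ≤ r) :
    ∑ Q ∈ F, a Q * σ Q * (∑ R ∈ F with Q ⊆ R, a R) ^ r ≤
      ENNReal.ofReal r * ∑ Q ∈ F, a Q * σ Q * (∑ R ∈ F with Q ⊆ R, a R) ^ (r - 1) *
        localAverage σ F a Q := by
  set U : Set α → ℝ≥0∞ := fun Q => ∑ R ∈ F with Q ⊆ R, a R
  have chain (Q : Set α) : σ Q * U Q ^ r ≤
      ENNReal.ofReal r * ∑ R ∈ F with Q ⊆ R, σ Q * (a R * U R ^ (r - 1)) := by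
    rcases Q.eq_empty_or_nonempty with rfl | hQ
    · simp
    rw [← Finset.mul_sum, mul_left_comm]
    refine mul_le_mul_right ?_ _
    refine (rpow_sum_le_of_isChain_dual (by simpa using hF.isChain_supersets hQ) hr a).trans ?_
    gcongr with R
    exact Finset.sum_le_sum_of_subset (Finset.filter_subset_filter _ (Finset.filter_subset _ _))
  calc ∑ Q ∈ F, a Q * σ Q * U Q ^ r
      ≤ ∑ Q ∈ F, a Q * (ENNReal.ofReal r * ∑ R ∈ F with Q ⊆ R, σ Q * (a R * U R ^ (r - 1))) := by
        refine Finset.sum_le_sum fun Q _ => ?_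
        rw [mul_assoc]
        exact mul_le_mul_right (chain Q) _
    _ = ENNReal.ofReal r * ∑ R ∈ F, a R * U R ^ (r - 1) * ∑ Q ∈ F with Q ⊆ R, a Q * σ Q := by
        simp only [Finset.mul_sum, Finset.sum_filter, mul_ite, mul_zero]
        rw [Finset.sum_comm]
        congr! 3
        ring
    _ = ENNReal.ofReal r * ∑ Q ∈ F, a Q * σ Q * U Q ^ (r - 1) * localAverage σ F a Q := by
        congr! 2 with Q hQ
        rw [← mul_localAverage (hσ Q hQ)]
        ring

theorem IsLaminar.lintegral_rpow_le_of_two_le (hF : IsLaminar (F : Set (Set α)))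
    (hm : ∀ Q ∈ F, MeasurableSet Q) (hσ : ∀ Q ∈ F, σ Q ≠ ∞) (ha : ∀ Q ∈ F, a Q ≠ ∞) {q : ℝ}
    (hq : 2 ≤ q) :
    ∫⁻ x, (∑ Q ∈ F, Q.indicator (fun _ => a Q) x) ^ q ∂σ ≤
      ENNReal.ofReal q * (ENNReal.ofReal (q - 1) ^ (q - 1) *
        ∑ Q ∈ F, a Q * σ Q * localAverage σ F a Q ^ (q - 1)) := by
  classical
  refine (hF.lintegral_rpow_le_sum_rpow_supersets hm (by linarith)).trans ?_
  gcongr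
  exact sum_mul_rpow_le_of_le_sum_mul_rpow_sub_one_mul (by linarith)
    (fun Q hQ => ENNReal.mul_ne_top (ha Q hQ) (hσ Q hQ))
    (fun Q _ => ENNReal.sum_ne_top.2 fun R hR => ha R (Finset.mem_filter.1 hR).1)
    (hF.sum_mul_rpow_supersets_le hσ (by linarith))

theorem IsLaminar.lintegral_rpow_sum_indicator_le (hF : IsLaminar (F : Set (Set α)))
    (hm : ∀ Q ∈ F, MeasurableSet Q) (hσ : ∀ Q ∈ F, σ Q ≠ ∞) (ha : ∀ Q ∈ F, a Q ≠ ∞) {q : ℝ}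
    (hq : 1 ≤ q) :
    ∫⁻ x, (∑ Q ∈ F, Q.indicator (fun _ => a Q) x) ^ q ∂σ ≤
      ENNReal.ofReal q ^ q * ∑ Q ∈ F, a Q * σ Q * localAverage σ F a Q ^ (q - 1) := by
  have hq₁ : 1 ≤ ENNReal.ofReal q := by simpa using hq
  rcases le_total q 2 with hq₂ | hq₂
  · refine (hF.lintegral_rpow_le_of_le_two hm hσ hq hq₂).trans ?_
    gcongr
    exact ENNReal.le_rpow_self_of_one_le hq₁ hq
  · refine (hF.lintegral_rpow_le_of_two_le hm hσ ha hq₂).trans ?_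
    rw [← mul_assoc]
    gcongr
    calc ENNReal.ofReal q * ENNReal.ofReal (q - 1) ^ (q - 1)
        ≤ ENNReal.ofReal q * ENNReal.ofReal q ^ (q - 1) := by gcongr; linarith
      _ = ENNReal.ofReal q ^ q := by
        rw [ENNReal.rpow_sub _ _ (one_pos.trans_le hq₁).ne' ENNReal.ofReal_ne_top,
          ENNReal.rpow_one,
          ENNReal.mul_div_cancel (one_pos.trans_le hq₁).ne' ENNReal.ofReal_ne_top]

end CarlesonSum

theorem IsLaminar.measure_biUnion_le [MeasurableSpace α] {μ ρ : Measure α} {G : Finset (Set α)}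
    (hG : IsLaminar (G : Set (Set α))) (hm : ∀ Q ∈ G, MeasurableSet Q)
    (h : ∀ Q ∈ G, μ Q ≤ ρ Q) : μ (⋃ Q ∈ G, Q) ≤ ρ (⋃ Q ∈ G, Q) := by
  classical
  set M := G.filter fun Q => Maximal (· ∈ G) Q
  have hMG : M ⊆ G := Finset.filter_subset _ _
  have cover : ⋃ Q ∈ G, Q ⊆ ⋃ Q ∈ M, Q := iUnion₂_subset fun Q hQ => by
    obtain ⟨R, hQR, hR⟩ := G.exists_le_maximal hQ
    exact hQR.trans (subset_biUnion_of_mem (u := id) (Finset.mem_filter.2 ⟨hR.1, hR⟩))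
  have disj : (M : Set (Set α)).PairwiseDisjoint id := by
    intro Q hQ R hR hne
    obtain ⟨hQ, hQ_max⟩ := Finset.mem_filter.1 hQ
    obtain ⟨hR, hR_max⟩ := Finset.mem_filter.1 hR
    rcases hG Q hQ R hR with hQR | hRQ | hd
    · exact absurd (hQ_max.eq_of_le hR hQR) hne
    · exact absurd (hR_max.eq_of_ge hQ hRQ) hne
    · exact hd
  calc μ (⋃ Q ∈ G, Q) ≤ μ (⋃ Q ∈ M, Q) := measure_mono cover
    _ ≤ ∑ Q ∈ M, μ Q := measure_biUnion_finset_le _ _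
    _ ≤ ∑ Q ∈ M, ρ Q := Finset.sum_le_sum fun Q hQ => h Q (hMG hQ)
    _ = ρ (⋃ Q ∈ M, Q) := (measure_biUnion_finset disj fun Q hQ => hm Q (hMG hQ)).symm
    _ ≤ ρ (⋃ Q ∈ G, Q) := measure_mono (biUnion_subset_biUnion_left hMG)

end Laminar

theorem mul_sum_mul_rpow_le_of_weak_type {ι : Type*} {G : Finset ι} {x m : ι → ℝ≥0∞} {D : ℝ≥0∞}
    {s : ℝ} (hs₀ : 0 ≤ s) (hs : s < 1) (hm : ∀ i ∈ G, m i ≠ ∞)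
    (h : ∀ i ∈ G, x i * ∑ j ∈ G with x i ≤ x j, m j ≤ D) :
    ENNReal.ofReal (1 - s) * ∑ i ∈ G, m i * x i ^ s ≤ D ^ s * (∑ i ∈ G, m i) ^ (1 - s) := by
  classical
  induction G using Finset.induction_on_min_value x with
  | empty => simp
  | insert b G hb hmin ih =>
    have ih := ih (fun i hi => hm i (Finset.mem_insert_of_mem hi)) fun i hi =>
      le_trans (by gcongr; exact Finset.subset_insert b G) (h i (Finset.mem_insert_of_mem hi))
    set M := ∑ i ∈ insert b G, m i with hM
    have hMb : M = ∑ i ∈ G, m i + m b := by rw [hM, Finset.sum_insert hb, add_comm]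
    have hMD : x b * M ≤ D := by
      have all : ∀ j ∈ insert b G, x b ≤ x j := by simpa using hmin
      simpa only [Finset.filter_true_of_mem all] using h b (Finset.mem_insert_self b G)
    have smallest : m b * x b ^ s ≤ D ^ s * (m b * M ^ (1 - s - 1)) := by
      rcases eq_or_ne M 0 with hM₀ | hM₀
      · simp [show m b = 0 from (add_eq_zero.1 (hMb ▸ hM₀)).2]
      have hMs : M ^ s * M ^ (1 - s - 1) = 1 := by
        rw [← ENNReal.rpow_add _ _ hM₀ (ENNReal.sum_ne_top.2 hm)]
        simp
      calc m b * x b ^ s = m b * x b ^ s * (M ^ s * M ^ (1 - s - 1)) := by rw [hMs, mul_one]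
        _ = (x b * M) ^ s * (m b * M ^ (1 - s - 1)) := by
            rw [ENNReal.mul_rpow_of_nonneg _ _ hs₀]
            ring
        _ ≤ D ^ s * (m b * M ^ (1 - s - 1)) := by gcongr
    calc ENNReal.ofReal (1 - s) * ∑ i ∈ insert b G, m i * x i ^ s
        = ENNReal.ofReal (1 - s) * ∑ i ∈ G, m i * x i ^ s +
            ENNReal.ofReal (1 - s) * (m b * x b ^ s) := by
          rw [Finset.sum_insert hb, mul_add, add_comm]
      _ ≤ D ^ s * (∑ i ∈ G, m i) ^ (1 - s) +
            ENNReal.ofReal (1 - s) * (D ^ s * (m b * M ^ (1 - s - 1))) := by gcongr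
      _ = D ^ s * ((∑ i ∈ G, m i) ^ (1 - s) +
            ENNReal.ofReal (1 - s) * (m b * M ^ (1 - s - 1))) := by ring
      _ ≤ D ^ s * M ^ (1 - s) := by
          rw [hMb]
          gcongr
          exact rpow_add_mul_le_add_rpow (sub_pos.2 hs) (by linarith) _ _

theorem sum_mul_prod_rpow_le_prod_sum_rpow {ι κ : Type*} (G : Finset κ) (I : Finset ι)
    (m : κ → ℝ≥0∞) (f : ι → κ → ℝ≥0∞) {t : ι → ℝ} (ht₀ : ∀ i ∈ I, 0 ≤ t i)
    (ht : ∑ i ∈ I, t i = 1) :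
    ∑ k ∈ G, m k * ∏ i ∈ I, f i k ^ t i ≤ ∏ i ∈ I, (∑ k ∈ G, m k * f i k) ^ t i := by
  let _ : MeasurableSpace κ := ⊤
  have := ENNReal.lintegral_prod_norm_pow_le (μ := ∑ k ∈ G, m k • Measure.dirac k) I
    (f := f) (fun i _ => measurable_from_top.aemeasurable) ht ht₀
  simpa [lintegral_finsetSum_measure, lintegral_smul_measure] using this

theorem prod_const_rpow {ι : Type*} {I : Finset ι} {t : ι → ℝ} (ht₀ : ∀ i ∈ I, 0 ≤ t i)
    (c : ℝ≥0∞) : ∏ i ∈ I, c ^ t i = c ^ ∑ i ∈ I, t i := by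
  induction I using Finset.cons_induction with
  | empty => simp
  | cons i I hi ih =>
    obtain ⟨hi₀, hI₀⟩ := (Finset.forall_mem_cons hi _).1 ht₀
    rw [Finset.prod_cons, Finset.sum_cons, ih hI₀,
      ENNReal.rpow_add_of_nonneg _ _ hi₀ (Finset.sum_nonneg hI₀)]

/-- The average `⟨ρ⟩_Q` over `Q`, with respect to the reference measure `μ`, of the density of
`ρ`; for `ρ = w dμ` it is the average of the weight `w`. -/
noncomputable def relAverage {α : Type*} [MeasurableSpace α] (μ ρ : Measure α) (Q : Set α) :
    ℝ≥0∞ :=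
  ρ Q / μ Q

/-- A `Λ`-sparse family with respect to `μ`: laminar, made of measurable sets `Q` of positive finite
measure each of which has a portion `E Q` with `μ Q ≤ Λ * μ (E Q)`, the portions being pairwise
disjoint. -/
structure IsSparseFamily {α : Type*} [MeasurableSpace α] (Λ : ℝ≥0∞) (μ : Measure α)
    (S : Set (Set α)) : Prop where
  isLaminar : IsLaminar S
  measurableSet : ∀ Q ∈ S, MeasurableSet Q
  measure_ne_zero : ∀ Q ∈ S, μ Q ≠ 0
  measure_ne_top : ∀ Q ∈ S, μ Q ≠ ∞
  exists_disjoint : ∃ E : Set α → Set α,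
    (∀ Q ∈ S, E Q ⊆ Q ∧ MeasurableSet (E Q) ∧ μ Q ≤ Λ * μ (E Q)) ∧ S.PairwiseDisjoint E

namespace IsSparseFamily

variable {α : Type*} [MeasurableSpace α] {Λ : ℝ≥0∞} {μ ρ : Measure α} {S T : Set (Set α)}
  {G : Finset (Set α)}

theorem mono (hT : IsSparseFamily Λ μ T) (hST : S ⊆ T) : IsSparseFamily Λ μ S where
  isLaminar := hT.isLaminar.mono hST
  measurableSet Q hQ := hT.measurableSet Q (hST hQ)
  measure_ne_zero Q hQ := hT.measure_ne_zero Q (hST hQ)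
  measure_ne_top Q hQ := hT.measure_ne_top Q (hST hQ)
  exists_disjoint := hT.exists_disjoint.imp fun _ hE =>
    ⟨fun Q hQ => hE.1 Q (hST hQ), hE.2.subset hST⟩

theorem sum_measure_le (hG : IsSparseFamily Λ μ (G : Set (Set α))) :
    ∑ Q ∈ G, μ Q ≤ Λ * μ (⋃ Q ∈ G, Q) := by
  obtain ⟨E, hE, hd⟩ := hG.exists_disjoint
  calc ∑ Q ∈ G, μ Q ≤ ∑ Q ∈ G, Λ * μ (E Q) := Finset.sum_le_sum fun Q hQ => (hE Q hQ).2.2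
    _ = Λ * μ (⋃ Q ∈ G, E Q) := by
      rw [← Finset.mul_sum, measure_biUnion_finset hd fun Q hQ => (hE Q hQ).2.1]
    _ ≤ Λ * μ (⋃ Q ∈ G, Q) := by
      gcongr with Q hQ
      exact (hE Q hQ).1

theorem mul_sum_measure_le (hG : IsSparseFamily Λ μ (G : Set (Set α))) {x : ℝ≥0∞}
    (hx : ∀ Q ∈ G, x ≤ relAverage μ ρ Q) : x * ∑ Q ∈ G, μ Q ≤ Λ * ρ (⋃ Q ∈ G, Q) := by
  calc x * ∑ Q ∈ G, μ Q ≤ x * (Λ * μ (⋃ Q ∈ G, Q)) := by gcongr; exact hG.sum_measure_le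
    _ = Λ * (x • μ) (⋃ Q ∈ G, Q) := by rw [Measure.smul_apply, smul_eq_mul, mul_left_comm]
    _ ≤ Λ * ρ (⋃ Q ∈ G, Q) := by
      have hle : ∀ Q ∈ G, (x • μ) Q ≤ ρ Q := fun Q hQ => ENNReal.mul_le_of_le_div (hx Q hQ)
      exact mul_le_mul_right (hG.isLaminar.measure_biUnion_le hG.measurableSet hle) _

theorem sum_mul_rpow_average_le (hG : IsSparseFamily Λ μ (G : Set (Set α))) {Q : Set α}
    (hGQ : ∀ R ∈ G, R ⊆ Q) (hQ₀ : μ Q ≠ 0) (hQ : μ Q ≠ ∞) {s : ℝ} (hs₀ : 0 ≤ s) (hs : s < 1) :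
    ∑ R ∈ G, μ R * relAverage μ ρ R ^ s ≤
      Λ / ENNReal.ofReal (1 - s) * (μ Q * relAverage μ ρ Q ^ s) := by
  classical
  have sub_Q (x : ℝ≥0∞) : ⋃ R ∈ G.filter fun R => x ≤ relAverage μ ρ R, R ⊆ Q :=
    iUnion₂_subset fun R hR => hGQ R (Finset.mem_filter.1 hR).1
  have weak (R : Set α) :
      relAverage μ ρ R * ∑ R' ∈ G with relAverage μ ρ R ≤ relAverage μ ρ R', μ R' ≤ Λ * ρ Q :=
    ((hG.mono (Finset.coe_subset.2 (G.filter_subset _))).mul_sum_measure_le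
      fun R' hR' => (Finset.mem_filter.1 hR').2).trans (by gcongr; exact sub_Q _)
  have total : ∑ R ∈ G, μ R ≤ Λ * μ Q := hG.sum_measure_le.trans (by
    gcongr
    exact iUnion₂_subset hGQ)
  have hμ : μ Q ^ (1 - s) = μ Q / μ Q ^ s := by
    rw [ENNReal.rpow_sub _ _ hQ₀ hQ, ENNReal.rpow_one]
  have hΛ : Λ ^ s * Λ ^ (1 - s) = Λ := by
    rw [← ENNReal.rpow_add_of_nonneg _ _ hs₀ (sub_nonneg.2 hs.le), add_sub_cancel,
      ENNReal.rpow_one]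
  rw [ENNReal.mul_comm_div, mul_div_assoc', ENNReal.le_div_iff_mul_le (by simp [hs]) (by simp),
    mul_comm]
  calc ENNReal.ofReal (1 - s) * ∑ R ∈ G, μ R * relAverage μ ρ R ^ s
      ≤ (Λ * ρ Q) ^ s * (∑ R ∈ G, μ R) ^ (1 - s) :=
        mul_sum_mul_rpow_le_of_weak_type hs₀ hs hG.measure_ne_top fun R _ => weak R
    _ ≤ (Λ * ρ Q) ^ s * (Λ * μ Q) ^ (1 - s) := by gcongr
    _ = Λ ^ s * Λ ^ (1 - s) * (ρ Q ^ s * μ Q ^ (1 - s)) := by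
        rw [ENNReal.mul_rpow_of_nonneg _ _ hs₀, ENNReal.mul_rpow_of_nonneg _ _ (sub_nonneg.2 hs.le)]
        ring
    _ = Λ * (μ Q * relAverage μ ρ Q ^ s) := by
        rw [hΛ, hμ, relAverage, ENNReal.div_rpow_of_nonneg _ _ hs₀, div_eq_mul_inv, div_eq_mul_inv]
        ring

theorem sum_mul_prod_rpow_average_le (hG : IsSparseFamily Λ μ (G : Set (Set α))) {Q : Set α}
    (hGQ : ∀ R ∈ G, R ⊆ Q) (hQ₀ : μ Q ≠ 0) (hQ : μ Q ≠ ∞) {ι : Type*} [Fintype ι]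
    {ρ : ι → Measure α} {θ : ι → ℝ} (hθ : ∀ i, 0 ≤ θ i) (hθ₀ : 0 < ∑ i, θ i)
    (hθ₁ : ∑ i, θ i < 1) :
    ∑ R ∈ G, μ R * ∏ i, relAverage μ (ρ i) R ^ θ i ≤
      Λ / ENNReal.ofReal (1 - ∑ i, θ i) * (μ Q * ∏ i, relAverage μ (ρ i) Q ^ θ i) := by
  set s := ∑ i, θ i
  set t : ι → ℝ := fun i => θ i / s
  have ht₀ : ∀ i ∈ Finset.univ, 0 ≤ t i := fun i _ => div_nonneg (hθ i) hθ₀.le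
  have ht : ∑ i, t i = 1 := by rw [← Finset.sum_div, div_self hθ₀.ne']
  have split (x : ℝ≥0∞) (i : ι) : (x ^ s) ^ t i = x ^ θ i := by
    rw [← ENNReal.rpow_mul, mul_div_cancel₀ _ hθ₀.ne']
  calc ∑ R ∈ G, μ R * ∏ i, relAverage μ (ρ i) R ^ θ i
      = ∑ R ∈ G, μ R * ∏ i, (relAverage μ (ρ i) R ^ s) ^ t i := by simp only [split]
    _ ≤ ∏ i, (∑ R ∈ G, μ R * relAverage μ (ρ i) R ^ s) ^ t i :=
        sum_mul_prod_rpow_le_prod_sum_rpow G _ _ _ ht₀ ht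
    _ ≤ ∏ i, (Λ / ENNReal.ofReal (1 - s) * (μ Q * relAverage μ (ρ i) Q ^ s)) ^ t i := by
        gcongr with i hi
        · exact ht₀ i hi
        · exact hG.sum_mul_rpow_average_le hGQ hQ₀ hQ hθ₀.le hθ₁
    _ = _ := by
        simp only [ENNReal.mul_rpow_of_nonneg _ _ (ht₀ _ (Finset.mem_univ _)),
          Finset.prod_mul_distrib, prod_const_rpow ht₀, ht, ENNReal.rpow_one, split]

end IsSparseFamily

section MultilinearWeightCondition

-- Writing positive finite quantities as exponentials turns inequalities between products of powers
-- into linear inequalities between exponents.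
theorem ofReal_exp_mul (s t : ℝ) :
    ENNReal.ofReal (Real.exp s) * ENNReal.ofReal (Real.exp t) =
      ENNReal.ofReal (Real.exp (s + t)) := by
  rw [← ENNReal.ofReal_mul (Real.exp_pos s).le, Real.exp_add]

theorem ofReal_exp_div (s t : ℝ) :
    ENNReal.ofReal (Real.exp s) / ENNReal.ofReal (Real.exp t) =
      ENNReal.ofReal (Real.exp (s - t)) := by
  rw [← ENNReal.ofReal_div_of_pos (Real.exp_pos t), Real.exp_sub]

theorem ofReal_exp_rpow (t r : ℝ) :
    ENNReal.ofReal (Real.exp t) ^ r = ENNReal.ofReal (Real.exp (t * r)) := by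
  rw [ENNReal.ofReal_rpow_of_pos (Real.exp_pos t), Real.exp_mul]

theorem ofReal_exp_le_ofReal_exp {s t : ℝ} :
    ENNReal.ofReal (Real.exp s) ≤ ENNReal.ofReal (Real.exp t) ↔ s ≤ t := by
  rw [ENNReal.ofReal_le_ofReal_iff (Real.exp_pos t).le, Real.exp_le_exp]

theorem exists_ofReal_exp_eq {x : ℝ≥0∞} (h₀ : x ≠ 0) (h : x ≠ ∞) :
    ∃ t : ℝ, ENNReal.ofReal (Real.exp t) = x :=
  ⟨Real.log x.toReal, by rw [Real.exp_log (ENNReal.toReal_pos h₀ h), ENNReal.ofReal_toReal h]⟩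

variable {X V Y B : ℝ≥0∞} {e₁ e₂ e₃ τ q : ℝ}

theorem exists_ofReal_exp_eq_of_rpow_mul_le (h₀ : X * V * Y ≠ 0) (hB : B ≠ ∞) (he₁ : 0 < e₁)
    (he₂ : 0 < e₂) (he₃ : 0 < e₃) (h : X ^ e₁ * V ^ e₂ * Y ^ e₃ ≤ B) :
    ∃ x v y b : ℝ, ENNReal.ofReal (Real.exp x) = X ∧ ENNReal.ofReal (Real.exp v) = V ∧
      ENNReal.ofReal (Real.exp y) = Y ∧ ENNReal.ofReal (Real.exp b) = B := by
  obtain ⟨⟨hX, hV⟩, hY⟩ : (X ≠ 0 ∧ V ≠ 0) ∧ Y ≠ 0 := by simpa only [mul_ne_zero_iff] using h₀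
  have hfin := ne_top_of_le_ne_top hB h
  have rpow_ne_zero {x : ℝ≥0∞} {e : ℝ} (hx : x ≠ 0) (he : 0 < e) : x ^ e ≠ 0 := by
    simp [ENNReal.rpow_eq_zero_iff, hx, he.le]
  have hX₀ := rpow_ne_zero hX he₁
  have hV₀ := rpow_ne_zero hV he₂
  have hY₀ := rpow_ne_zero hY he₃
  have hB₀ : B ≠ 0 := fun hB => mul_ne_zero (mul_ne_zero hX₀ hV₀) hY₀ (by simpa [hB] using h)
  obtain ⟨x, hx⟩ := exists_ofReal_exp_eq hX fun hX => hfin <| by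
    simp [hX, he₁, hV₀, hY₀, ENNReal.top_mul]
  obtain ⟨v, hv⟩ := exists_ofReal_exp_eq hV fun hV => hfin <| by
    simp [hV, he₂, hX₀, hY₀, ENNReal.top_mul, ENNReal.mul_top]
  obtain ⟨y, hy⟩ := exists_ofReal_exp_eq hY fun hY => hfin <| by
    simp only [hY, ENNReal.top_rpow_of_pos he₃, ENNReal.mul_top (mul_ne_zero hX₀ hV₀)]
  obtain ⟨b, hb⟩ := exists_ofReal_exp_eq hB₀ hB
  exact ⟨x, v, y, b, hx, hv, hy, hb⟩

theorem mul_mul_le_of_rpow_mul_le (hB : B ≠ ∞) (he₁ : 0 < e₁) (he₂ : 0 < e₂) (he₃ : 0 < e₃)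
    (hτ : 0 ≤ τ) (h : X ^ e₁ * V ^ e₂ * Y ^ e₃ ≤ B) :
    X * V * Y ≤ B ^ τ * (X ^ (1 - τ * e₁) * V ^ (1 - τ * e₂) * Y ^ (1 - τ * e₃)) := by
  rcases eq_or_ne (X * V * Y) 0 with h₀ | h₀
  · simp only [h₀, zero_le]
  obtain ⟨x, v, y, b, rfl, rfl, rfl, rfl⟩ :=
    exists_ofReal_exp_eq_of_rpow_mul_le h₀ hB he₁ he₂ he₃ h
  simp only [ofReal_exp_rpow, ofReal_exp_mul, ofReal_exp_le_ofReal_exp] at h ⊢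
  linear_combination τ * h

theorem mul_mul_mul_rpow_le_of_rpow_mul_le (hB : B ≠ ∞) (he₁ : 0 < e₁) (he₂ : 0 < e₂)
    (he₃ : 0 < e₃) (hq : e₃ * q = 1) (hτ : τ * (q - 1) ≤ q)
    (h : X ^ e₁ * V ^ e₂ * Y ^ e₃ ≤ B) :
    X * V * Y * (B ^ τ *
      (X ^ (1 - τ * e₁) * V ^ (1 - τ * e₂) * Y ^ (1 - τ * e₃)) / Y) ^ (q - 1) ≤
      B ^ q * (X ^ (q * (1 - e₁)) * V ^ (q * (1 - e₂))) := by
  rcases eq_or_ne (X * V * Y) 0 with h₀ | h₀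
  · simp only [h₀, zero_mul, zero_le]
  obtain ⟨x, v, y, b, rfl, rfl, rfl, rfl⟩ :=
    exists_ofReal_exp_eq_of_rpow_mul_le h₀ hB he₁ he₂ he₃ h
  simp only [ofReal_exp_rpow, ofReal_exp_mul, ofReal_exp_div, ofReal_exp_le_ofReal_exp] at h ⊢
  linear_combination (q - τ * (q - 1)) * h - y * hq

end MultilinearWeightCondition

section SparseBound

variable {α : Type*} [MeasurableSpace α] {Λ B : ℝ≥0∞} {μ σ₁ ν σ₂ : Measure α}
  {F : Finset (Set α)} {e₁ e₂ e₃ τ q : ℝ}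

theorem IsSparseFamily.sum_mul_rpow_mul_rpow_mul_rpow_average_le
    (hF : IsSparseFamily Λ μ (F : Set (Set α))) {Q : Set α} (hFQ : ∀ R ∈ F, R ⊆ Q)
    (hQ₀ : μ Q ≠ 0) (hQ : μ Q ≠ ∞) {θ₁ θ₂ θ₃ : ℝ} (hθ₁ : 0 < θ₁) (hθ₂ : 0 < θ₂) (hθ₃ : 0 < θ₃)
    (hθ : θ₁ + θ₂ + θ₃ < 1) :
    ∑ R ∈ F, μ R *
        (relAverage μ σ₁ R ^ θ₁ * relAverage μ ν R ^ θ₂ * relAverage μ σ₂ R ^ θ₃) ≤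
      Λ / ENNReal.ofReal (1 - (θ₁ + θ₂ + θ₃)) * (μ Q *
        (relAverage μ σ₁ Q ^ θ₁ * relAverage μ ν Q ^ θ₂ * relAverage μ σ₂ Q ^ θ₃)) := by
  have sum_θ : ∑ i, ![θ₁, θ₂, θ₃] i = θ₁ + θ₂ + θ₃ := Fin.sum_univ_three _
  have nonneg (i : Fin 3) : 0 ≤ ![θ₁, θ₂, θ₃] i := by
    fin_cases i
    exacts [hθ₁.le, hθ₂.le, hθ₃.le]
  simpa [Fin.prod_univ_three, sum_θ] using
    hF.sum_mul_prod_rpow_average_le hFQ hQ₀ hQ (ρ := ![σ₁, ν, σ₂]) nonneg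
      (by rw [sum_θ]; positivity) (by rwa [sum_θ])

theorem IsSparseFamily.localAverage_le (hF : IsSparseFamily Λ μ (F : Set (Set α))) (hB : B ≠ ∞)
    (he₁ : 0 < e₁) (he₂ : 0 < e₂) (he₃ : 0 < e₃) (hsum : e₁ + e₂ + e₃ = 2) (hτ : 1 < τ)
    (hτ₁ : τ * e₁ < 1) (hτ₂ : τ * e₂ < 1) (hτ₃ : τ * e₃ < 1)
    (h : ∀ Q ∈ F, relAverage μ σ₁ Q ^ e₁ * relAverage μ ν Q ^ e₂ * relAverage μ σ₂ Q ^ e₃ ≤ B)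
    {Q : Set α} (hQ : Q ∈ F) :
    localAverage σ₂ F (fun R => relAverage μ σ₁ R * relAverage μ ν R) Q ≤
      Λ / ENNReal.ofReal (2 * (τ - 1)) *
        (B ^ τ * (relAverage μ σ₁ Q ^ (1 - τ * e₁) * relAverage μ ν Q ^ (1 - τ * e₂) *
          relAverage μ σ₂ Q ^ (1 - τ * e₃)) / relAverage μ σ₂ Q) := by
  classical
  set X := relAverage μ σ₁
  set V := relAverage μ ν
  set Y := relAverage μ σ₂
  set P : Set α → ℝ≥0∞ := fun R => X R ^ (1 - τ * e₁) * V R ^ (1 - τ * e₂) * Y R ^ (1 - τ * e₃)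
  have hY {R : Set α} (hR : R ∈ F) : σ₂ R = μ R * Y R :=
    (ENNReal.mul_div_cancel (hF.measure_ne_zero R hR) (hF.measure_ne_top R hR)).symm
  have kolmogorov : ∑ R ∈ F with R ⊆ Q, μ R * P R ≤
      Λ / ENNReal.ofReal (2 * (τ - 1)) * (μ Q * P Q) := by
    have total : (1 - τ * e₁) + (1 - τ * e₂) + (1 - τ * e₃) = 1 - 2 * (τ - 1) := by
      linear_combination -τ * hsum
    have hQF := hF.mono (Finset.coe_subset.2 (F.filter_subset (· ⊆ Q)))
    have := hQF.sum_mul_rpow_mul_rpow_mul_rpow_average_le (σ₁ := σ₁) (ν := ν) (σ₂ := σ₂)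
      (fun R hR => (Finset.mem_filter.1 hR).2) (hF.measure_ne_zero Q hQ) (hF.measure_ne_top Q hQ)
      (sub_pos.2 hτ₁) (sub_pos.2 hτ₂) (sub_pos.2 hτ₃) (by linarith)
    rwa [total, _root_.sub_sub_cancel] at this
  calc localAverage σ₂ F (fun R => X R * V R) Q
      ≤ (∑ R ∈ F with R ⊆ Q, B ^ τ * (μ R * P R)) / σ₂ Q := by
        refine ENNReal.div_le_div_right (Finset.sum_le_sum fun R hR => ?_) _
        have hR := (Finset.mem_filter.1 hR).1
        calc X R * V R * σ₂ R = μ R * (X R * V R * Y R) := by rw [hY hR]; ring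
          _ ≤ μ R * (B ^ τ * P R) :=
            mul_le_mul_right
              (mul_mul_le_of_rpow_mul_le hB he₁ he₂ he₃ (by linarith) (h R hR)) _
          _ = B ^ τ * (μ R * P R) := mul_left_comm _ _ _
    _ ≤ B ^ τ * (Λ / ENNReal.ofReal (2 * (τ - 1)) * (μ Q * P Q)) / σ₂ Q := by
        rw [← Finset.mul_sum]
        gcongr
    _ = Λ / ENNReal.ofReal (2 * (τ - 1)) * (μ Q * (B ^ τ * P Q) / (μ Q * Y Q)) := by
        rw [hY hQ]
        simp only [div_eq_mul_inv]
        ring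
    _ = Λ / ENNReal.ofReal (2 * (τ - 1)) * (B ^ τ * P Q / Y Q) := by
        rw [ENNReal.mul_div_mul_left _ _ (hF.measure_ne_zero Q hQ) (hF.measure_ne_top Q hQ)]

theorem IsSparseFamily.lintegral_rpow_sum_le_of_ne_top
    (hF : IsSparseFamily Λ μ (F : Set (Set α))) (hσ : ∀ Q ∈ F, σ₂ Q ≠ ∞)
    (ha : ∀ Q ∈ F, relAverage μ σ₁ Q * relAverage μ ν Q ≠ ∞) (hB : B ≠ ∞)
    (he₁ : 0 < e₁) (he₂ : 0 < e₂) (he₃ : 0 < e₃) (hsum : e₁ + e₂ + e₃ = 2) (hq : e₃ * q = 1)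
    (hτ : 1 < τ) (hτ₁ : τ * e₁ < 1) (hτ₂ : τ * e₂ < 1) (hτ₃ : τ * e₃ < 1)
    (h : ∀ Q ∈ F, relAverage μ σ₁ Q ^ e₁ * relAverage μ ν Q ^ e₂ * relAverage μ σ₂ Q ^ e₃ ≤ B) :
    ∫⁻ x, (∑ Q ∈ F, Q.indicator (fun _ => relAverage μ σ₁ Q * relAverage μ ν Q) x) ^ q ∂σ₂ ≤
      ENNReal.ofReal q ^ q * (Λ / ENNReal.ofReal (2 * (τ - 1))) ^ (q - 1) * B ^ q *
        ∑ Q ∈ F, relAverage μ σ₁ Q ^ (q * (1 - e₁)) * relAverage μ ν Q ^ (q * (1 - e₂)) * μ Q := by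
  have hq₁ : 1 ≤ q := by nlinarith
  have hτq : τ * (q - 1) ≤ q := by nlinarith
  set X := relAverage μ σ₁
  set V := relAverage μ ν
  set Y := relAverage μ σ₂
  set K := Λ / ENNReal.ofReal (2 * (τ - 1))
  set W : Set α → ℝ≥0∞ := fun Q =>
    B ^ τ * (X Q ^ (1 - τ * e₁) * V Q ^ (1 - τ * e₂) * Y Q ^ (1 - τ * e₃)) / Y Q
  have term {Q : Set α} (hQ : Q ∈ F) :
      X Q * V Q * σ₂ Q * localAverage σ₂ F (fun R => X R * V R) Q ^ (q - 1) ≤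
        K ^ (q - 1) * B ^ q * (X Q ^ (q * (1 - e₁)) * V Q ^ (q * (1 - e₂)) * μ Q) := by
    have hY : μ Q * Y Q = σ₂ Q :=
      ENNReal.mul_div_cancel (hF.measure_ne_zero Q hQ) (hF.measure_ne_top Q hQ)
    calc X Q * V Q * σ₂ Q * localAverage σ₂ F (fun R => X R * V R) Q ^ (q - 1)
        ≤ X Q * V Q * σ₂ Q * (K * W Q) ^ (q - 1) := by
          gcongr
          exact hF.localAverage_le hB he₁ he₂ he₃ hsum hτ hτ₁ hτ₂ hτ₃ h hQ
      _ = K ^ (q - 1) * (X Q * V Q * Y Q * W Q ^ (q - 1)) * μ Q := by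
          rw [ENNReal.mul_rpow_of_nonneg _ _ (sub_nonneg.2 hq₁), ← hY]
          ring
      _ ≤ K ^ (q - 1) * (B ^ q * (X Q ^ (q * (1 - e₁)) * V Q ^ (q * (1 - e₂)))) * μ Q :=
          mul_le_mul_left (mul_le_mul_right
            (mul_mul_mul_rpow_le_of_rpow_mul_le hB he₁ he₂ he₃ hq hτq (h Q hQ)) _) _
      _ = _ := by ring
  refine (hF.isLaminar.lintegral_rpow_sum_indicator_le hF.measurableSet hσ ha hq₁).trans ?_
  refine (mul_le_mul_right (Finset.sum_le_sum fun Q hQ => term hQ) _).trans_eq ?_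
  rw [← Finset.mul_sum]
  ring

theorem lintegral_rpow_sum_indicator_filter
    {a : Set α → ℝ≥0∞} {p : Set α → Prop} [DecidablePred p]
    (hp : ∀ Q ∈ F, ¬ p Q → a Q = 0 ∨ σ₂ Q = 0) :
    ∫⁻ x, (∑ Q ∈ F with p Q, Q.indicator (fun _ => a Q) x) ^ q ∂σ₂ =
      ∫⁻ x, (∑ Q ∈ F, Q.indicator (fun _ => a Q) x) ^ q ∂σ₂ := by
  have vanish : ∀ᵐ x ∂σ₂, ∀ Q ∈ F, ¬ p Q → Q.indicator (fun _ => a Q) x = 0 := by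
    rw [F.eventually_all]
    intro Q hQ
    by_cases hpQ : p Q
    · simp [hpQ]
    rcases hp Q hQ hpQ with h | h
    · simp [h]
    · filter_upwards [measure_eq_zero_iff_ae_notMem.1 h] with x hx
      simp [hx]
  refine lintegral_congr_ae ?_
  filter_upwards [vanish] with x hx
  rw [Finset.sum_filter_of_ne fun Q hQ => not_imp_comm.1 (hx Q hQ)]

theorem IsSparseFamily.lintegral_rpow_sum_le (hF : IsSparseFamily Λ μ (F : Set (Set α)))
    (hB : B ≠ ∞) (he₁ : 0 < e₁) (he₂ : 0 < e₂) (he₃ : 0 < e₃) (hsum : e₁ + e₂ + e₃ = 2)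
    (hq : e₃ * q = 1) (hτ : 1 < τ) (hτ₁ : τ * e₁ < 1) (hτ₂ : τ * e₂ < 1) (hτ₃ : τ * e₃ < 1)
    (h : ∀ Q ∈ F, relAverage μ σ₁ Q ^ e₁ * relAverage μ ν Q ^ e₂ * relAverage μ σ₂ Q ^ e₃ ≤ B) :
    ∫⁻ x, (∑ Q ∈ F, Q.indicator (fun _ => relAverage μ σ₁ Q * relAverage μ ν Q) x) ^ q ∂σ₂ ≤
      ENNReal.ofReal q ^ q * (Λ / ENNReal.ofReal (2 * (τ - 1))) ^ (q - 1) * B ^ q *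
        ∑ Q ∈ F, relAverage μ σ₁ Q ^ (q * (1 - e₁)) * relAverage μ ν Q ^ (q * (1 - e₂)) * μ Q := by
  classical
  set X := relAverage μ σ₁
  set V := relAverage μ ν
  set Y := relAverage μ σ₂
  -- Members with a vanishing average contribute nothing; on the others the condition forces all
  -- three averages to be finite.
  set G := F.filter fun Q => X Q * V Q * Y Q ≠ 0
  have hGF : G ⊆ F := Finset.filter_subset _ _
  have drop : ∀ Q ∈ F, ¬ X Q * V Q * Y Q ≠ 0 → X Q * V Q = 0 ∨ σ₂ Q = 0 := by
    intro Q hQ hzero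
    refine (mul_eq_zero.1 (not_not.1 hzero)).imp_right fun hY => ?_
    exact (ENNReal.div_eq_zero_iff.1 hY).resolve_right (hF.measure_ne_top Q hQ)
  have finite : ∀ Q ∈ G, σ₂ Q ≠ ∞ ∧ X Q * V Q ≠ ∞ := by
    intro Q hQ
    obtain ⟨hQF, h₀⟩ := Finset.mem_filter.1 hQ
    obtain ⟨x, v, y, -, hx, hv, hy, -⟩ :=
      exists_ofReal_exp_eq_of_rpow_mul_le h₀ hB he₁ he₂ he₃ (h Q hQF)
    refine ⟨fun hσ => ENNReal.ofReal_ne_top (r := Real.exp y) ?_, ?_⟩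
    · simp only [hy, Y, relAverage, hσ, ENNReal.top_div_of_ne_top (hF.measure_ne_top Q hQF)]
    · rw [← hx, ← hv]
      exact ENNReal.mul_ne_top ENNReal.ofReal_ne_top ENNReal.ofReal_ne_top
  rw [← lintegral_rpow_sum_indicator_filter drop]
  refine ((hF.mono (Finset.coe_subset.2 hGF)).lintegral_rpow_sum_le_of_ne_top
    (fun Q hQ => (finite Q hQ).1) (fun Q hQ => (finite Q hQ).2) hB he₁ he₂ he₃ hsum hq hτ hτ₁ hτ₂
    hτ₃ fun Q hQ => h Q (hGF hQ)).trans ?_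
  gcongr

end SparseBound

theorem lintegral_rpow_tsum_eq_iSup {α ι : Type*} [MeasurableSpace α] [Countable ι] {σ : Measure α}
    {f : ι → α → ℝ≥0∞} (hf : ∀ i, AEMeasurable (f i) σ) {q : ℝ} (hq : 0 < q) :
    ∫⁻ x, (∑' i, f i x) ^ q ∂σ = ⨆ G : Finset ι, ∫⁻ x, (∑ i ∈ G, f i x) ^ q ∂σ := by
  rw [← lintegral_iSup_directed (fun G => ?_) (Monotone.directed_le fun G G' hG x => ?_)]
  · simp only [ENNReal.tsum_eq_iSup_sum]
    exact lintegral_congr fun x => (ENNReal.orderIsoRpow q hq).map_iSup _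
  · exact (Finset.aemeasurable_fun_sum _ fun i _ => hf i).pow_const _
  · exact ENNReal.rpow_le_rpow (Finset.sum_le_sum_of_subset hG) hq.le

theorem IsSparseFamily.lintegral_rpow_tsum_le {α : Type*} [MeasurableSpace α] {Λ B : ℝ≥0∞}
    {μ σ₁ ν σ₂ : Measure α} {S : Set (Set α)} {e₁ e₂ e₃ τ q : ℝ} (hS : IsSparseFamily Λ μ S)
    (hSc : S.Countable) (hB : B ≠ ∞) (he₁ : 0 < e₁) (he₂ : 0 < e₂) (he₃ : 0 < e₃)
    (hsum : e₁ + e₂ + e₃ = 2) (hq : e₃ * q = 1)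
    (hτ : 1 < τ) (hτ₁ : τ * e₁ < 1) (hτ₂ : τ * e₂ < 1) (hτ₃ : τ * e₃ < 1)
    (h : ∀ Q ∈ S, relAverage μ σ₁ Q ^ e₁ * relAverage μ ν Q ^ e₂ * relAverage μ σ₂ Q ^ e₃ ≤ B) :
    ∫⁻ x, (∑' Q : S, (Q : Set α).indicator
        (fun _ => relAverage μ σ₁ Q * relAverage μ ν Q) x) ^ q ∂σ₂ ≤
      ENNReal.ofReal q ^ q * (Λ / ENNReal.ofReal (2 * (τ - 1))) ^ (q - 1) * B ^ q *
        ∑' Q : S, relAverage μ σ₁ Q ^ (q * (1 - e₁)) * relAverage μ ν Q ^ (q * (1 - e₂)) *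
          μ Q := by
  have hq₀ : 0 < q := by nlinarith
  have := hSc.to_subtype
  rw [lintegral_rpow_tsum_eq_iSup (fun Q : S =>
    (measurable_const.indicator (hS.measurableSet Q Q.2)).aemeasurable) hq₀]
  refine iSup_le fun G => ?_
  set F := G.map (Function.Embedding.subtype _)
  have hFS : (F : Set (Set α)) ⊆ S := by simp [F]
  have finite := (hS.mono hFS).lintegral_rpow_sum_le hB he₁ he₂ he₃ hsum hq hτ hτ₁ hτ₂ hτ₃
    fun Q hQ => h Q (hFS hQ)
  simp only [F, Finset.sum_map, Function.Embedding.subtype_apply] at finite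
  refine finite.trans ?_
  gcongr
  exact ENNReal.sum_le_tsum G

open scoped Topology in
theorem exists_one_lt_forall_mul_lt_one {s : Finset ℝ} (hs : ∀ e ∈ s, e < 1) :
    ∃ τ > 1, ∀ e ∈ s, τ * e < 1 := by
  have near : ∀ᶠ τ in 𝓝[>] (1 : ℝ), ∀ e ∈ s, τ * e < 1 := by
    rw [s.eventually_all]
    intro e he
    exact nhdsWithin_le_nhds <|
      (continuous_mul_const e).tendsto' 1 e (one_mul e) |>.eventually_lt_const (hs e he)
  exact (Filter.Eventually.and (self_mem_nhdsWithin (s := Ioi (1 : ℝ))) near).exists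

theorem exists_const_rpow_lintegral_rpow_tsum_le {e₁ e₂ e₃ : ℝ} (he₁ : 0 < e₁) (he₂ : 0 < e₂)
    (he₃ : 0 < e₃) (he₁' : e₁ < 1) (he₂' : e₂ < 1) (he₃' : e₃ < 1) (hsum : e₁ + e₂ + e₃ = 2)
    {Λ : ℝ≥0∞} (hΛ : Λ ≠ ∞) :
    ∃ C : ℝ≥0∞, C ≠ ∞ ∧
      ∀ {α : Type*} [MeasurableSpace α] (μ σ₁ ν σ₂ : Measure α) (B : ℝ≥0∞), B ≠ ∞ →
        ∀ S : Set (Set α), S.Countable → IsSparseFamily Λ μ S →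
          (∀ Q ∈ S, relAverage μ σ₁ Q ^ e₁ * relAverage μ ν Q ^ e₂ *
            relAverage μ σ₂ Q ^ e₃ ≤ B) →
          (∫⁻ x, (∑' Q : S, (Q : Set α).indicator
              (fun _ => relAverage μ σ₁ Q * relAverage μ ν Q) x) ^ e₃⁻¹ ∂σ₂) ^ e₃ ≤
            C * B * (∑' Q : S, relAverage μ σ₁ (Q : Set α) ^ (e₃⁻¹ * (1 - e₁)) *
              relAverage μ ν (Q : Set α) ^ (e₃⁻¹ * (1 - e₂)) * μ (Q : Set α)) ^ e₃ := by
  obtain ⟨τ, hτ, hlt⟩ := exists_one_lt_forall_mul_lt_one (s := {e₁, e₂, e₃}) (by simp [*])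
  obtain ⟨hτ₁, hτ₂, hτ₃⟩ : τ * e₁ < 1 ∧ τ * e₂ < 1 ∧ τ * e₃ < 1 := by simpa using hlt
  have hq : 1 < e₃⁻¹ := (one_lt_inv₀ he₃).2 he₃'
  have denom_ne_zero : ENNReal.ofReal (2 * (τ - 1)) ≠ 0 :=
    (ENNReal.ofReal_pos.2 (mul_pos two_pos (sub_pos.2 hτ))).ne'
  refine ⟨(ENNReal.ofReal e₃⁻¹ ^ e₃⁻¹ *
    (Λ / ENNReal.ofReal (2 * (τ - 1))) ^ (e₃⁻¹ - 1)) ^ e₃, ?_, ?_⟩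
  · exact ENNReal.rpow_ne_top_of_nonneg he₃.le (ENNReal.mul_ne_top
      (ENNReal.rpow_ne_top_of_nonneg (by positivity) ENNReal.ofReal_ne_top)
      (ENNReal.rpow_ne_top_of_nonneg (sub_nonneg.2 hq.le) (ENNReal.div_ne_top hΛ denom_ne_zero)))
  intro α _ μ σ₁ ν σ₂ B hB S hSc hS h
  have bound := hS.lintegral_rpow_tsum_le hSc hB he₁ he₂ he₃ hsum (mul_inv_cancel₀ he₃.ne')
    hτ hτ₁ hτ₂ hτ₃ h
  refine (ENNReal.rpow_le_rpow bound he₃.le).trans_eq ?_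
  rw [ENNReal.mul_rpow_of_nonneg _ _ he₃.le, ENNReal.mul_rpow_of_nonneg _ _ he₃.le,
    ← ENNReal.rpow_mul B, inv_mul_cancel₀ he₃.ne', ENNReal.rpow_one]

theorem one_lt_conj {q : ℝ} (hq : 1 < q) : 1 < conj q :=
  (one_lt_div (sub_pos.2 hq)).2 (sub_one_lt q)

theorem one_div_conj {q : ℝ} (hq : 1 < q) : 1 / conj q = 1 - 1 / q := by
  have : 0 < q - 1 := sub_pos.2 hq
  rw [conj]
  field_simp

theorem statement7_general (p p1 p2 : ℝ) (hp1 : 1 < p1) (hp2 : 1 < p2)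
    (hp : 1 / p = 1 / p1 + 1 / p2) (hp0 : 1 < p) {Λ : ℝ≥0∞} (hΛ : Λ ≠ ∞) :
    ∃ C : ℝ≥0∞, C ≠ ∞ ∧
      ∀ {α : Type*} [MeasurableSpace α] (μ σ₁ ν σ₂ : Measure α) (A : ℝ≥0∞), A ≠ ∞ →
        ∀ S : Set (Set α), S.Countable → IsSparseFamily Λ μ S →
          (∀ Q ∈ S, relAverage μ ν Q * relAverage μ σ₁ Q ^ (p / conj p1) *
            relAverage μ σ₂ Q ^ (p / conj p2) ≤ A) →
          (∫⁻ x, (∑' Q : S, (Q : Set α).indicator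
              (fun _ => relAverage μ σ₁ Q * relAverage μ ν Q) x) ^ conj p2 ∂σ₂) ^ (1 / conj p2) ≤
            C * A ^ (1 / p) *
              (∑' Q : S, relAverage μ σ₁ (Q : Set α) ^ (conj p2 / p1) *
                relAverage μ ν (Q : Set α) ^ (conj p2 / conj p) *
                  μ (Q : Set α)) ^ (1 / conj p2) := by
  have inv_p_pos : 0 < 1 / p := by positivity
  have inv_p1_pos : 0 < 1 / p1 := by positivity
  have inv_p2_pos : 0 < 1 / p2 := by positivity
  have hc₁ := one_div_conj hp1
  have hc₂ := one_div_conj hp2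
  have c₁_pos : 0 < 1 / conj p1 := one_div_pos.2 (one_pos.trans (one_lt_conj hp1))
  have c₂_pos : 0 < 1 / conj p2 := one_div_pos.2 (one_pos.trans (one_lt_conj hp2))
  obtain ⟨C, hC, bound⟩ := exists_const_rpow_lintegral_rpow_tsum_le c₁_pos inv_p_pos c₂_pos
    (by linarith) ((div_lt_one (by linarith)).2 hp0) (by linarith) (by linarith) hΛ
  refine ⟨C, hC, fun μ σ₁ ν σ₂ A hA S hSc hS h => ?_⟩
  have normalized : ∀ Q ∈ S, relAverage μ σ₁ Q ^ (1 / conj p1) * relAverage μ ν Q ^ (1 / p) *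
      relAverage μ σ₂ Q ^ (1 / conj p2) ≤ A ^ (1 / p) := fun Q hQ => by
    convert ENNReal.rpow_le_rpow (h Q hQ) inv_p_pos.le using 1
    rw [ENNReal.mul_rpow_of_nonneg _ _ inv_p_pos.le, ENNReal.mul_rpow_of_nonneg _ _ inv_p_pos.le,
      ← ENNReal.rpow_mul, ← ENNReal.rpow_mul, mul_comm (_ ^ (1 / p))]
    congr 3 <;> field_simp
  have key := bound μ σ₁ ν σ₂ _ (ENNReal.rpow_ne_top_of_nonneg inv_p_pos.le hA) S hSc hS normalized
  rwa [show 1 - 1 / conj p1 = 1 / p1 by linarith, ← one_div_conj hp0, one_div (conj p2), inv_inv,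
    mul_one_div, mul_one_div, ← one_div] at key

theorem avg_eq_relAverage {n : ℕ} (w : Rn n → ℝ≥0∞) (Q : Set (Rn n)) :
    avg w Q = relAverage volume (volume.withDensity w) Q := by
  rw [relAverage, withDensity_apply', avg, mass]

theorem lpNorm_eq_lintegral_withDensity {n : ℕ} {g w : Rn n → ℝ≥0∞} (hg : Measurable g)
    (hw : Measurable w) (q : ℝ) :
    _root_.lpNorm g q w = (∫⁻ x, g x ^ q ∂volume.withDensity w) ^ (1 / q) := by
  rw [_root_.lpNorm, lintegral_withDensity_eq_lintegral_mul volume hw (hg.pow_const q)]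
  simp only [Pi.mul_apply, mul_comm]

theorem IsCube.exists_eq_pi_Ico {n : ℕ} {Q : Set (Rn n)} (hQ : IsCube Q) :
    ∃ (c : Rn n) (h : ℝ), 0 < h ∧ Q = univ.pi fun i => Ico (c i) (c i + h) := by
  obtain ⟨h, hh, c, rfl⟩ := hQ
  exact ⟨c, h, hh, by ext x; simp [Set.mem_pi]⟩

theorem IsCube.measurableSet {n : ℕ} {Q : Set (Rn n)} (hQ : IsCube Q) : MeasurableSet Q := by
  obtain ⟨c, h, -, rfl⟩ := hQ.exists_eq_pi_Ico
  exact MeasurableSet.univ_pi fun i => measurableSet_Ico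

theorem IsCube.volume_eq {n : ℕ} {Q : Set (Rn n)} (hQ : IsCube Q) :
    ∃ h : ℝ, 0 < h ∧ volume Q = ENNReal.ofReal h ^ n := by
  obtain ⟨c, h, hh, rfl⟩ := hQ.exists_eq_pi_Ico
  exact ⟨h, hh, by simp [Real.volume_pi_Ico]⟩

theorem IsCube.volume_ne_zero {n : ℕ} {Q : Set (Rn n)} (hQ : IsCube Q) : volume Q ≠ 0 := by
  obtain ⟨h, hh, hQ⟩ := hQ.volume_eq
  simp [hQ, hh]

theorem IsCube.volume_ne_top {n : ℕ} {Q : Set (Rn n)} (hQ : IsCube Q) : volume Q ≠ ∞ := by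
  obtain ⟨h, -, hQ⟩ := hQ.volume_eq
  simp [hQ]

theorem IsSparse.isSparseFamily {n : ℕ} {S : Set (Set (Rn n))} (hS : IsSparse S)
    (hcube : ∀ Q ∈ S, IsCube Q) (hlam : IsLaminar S) : IsSparseFamily 2 volume S where
  isLaminar := hlam
  measurableSet Q hQ := (hcube Q hQ).measurableSet
  measure_ne_zero Q hQ := (hcube Q hQ).volume_ne_zero
  measure_ne_top Q hQ := (hcube Q hQ).volume_ne_top
  exists_disjoint := hS

theorem le_APconst {n : ℕ} (p p1 p2 : ℝ) (w1 w2 : Rn n → ℝ≥0∞) {Q : Set (Rn n)} (hQ : IsCube Q) :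
    avg (vweight p p1 p2 w1 w2) Q * avg (dualW p1 w1) Q ^ (p / conj p1) *
      avg (dualW p2 w2) Q ^ (p / conj p2) ≤ APconst p p1 p2 w1 w2 :=
  le_iSup₂_of_le Q hQ le_rfl

theorem IsWeight.measurable_dualW {n : ℕ} {w : Rn n → ℝ≥0∞} (hw : IsWeight w) (q : ℝ) :
    Measurable (dualW q w) :=
  hw.1.pow_const _

/-- `L^{p₂'}(σ₂)` bound for `∑_{Q∈S} ⟨σ₁⟩_Q ⟨v_{\vec w}⟩_Q χ_Q`. -/
theorem statement7 {n : ℕ} (p p1 p2 : ℝ)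
    (hp1 : 1 < p1) (hp2 : 1 < p2) (hp : 1 / p = 1 / p1 + 1 / p2) (hp0 : 1 < p) :
    ∃ C : ℝ≥0∞, C ≠ ∞ ∧
      ∀ w1 w2 : Rn n → ℝ≥0∞, IsWeight w1 → IsWeight w2 →
        APconst p p1 p2 w1 w2 ≠ ∞ →
        ∀ S : Set (Set (Rn n)), S.Countable → (∀ Q ∈ S, IsCube Q) →
          (∀ Q ∈ S, ∀ R ∈ S, Q ⊆ R ∨ R ⊆ Q ∨ Q ∩ R = ∅) → IsSparse S →
          lpNorm
              (fun x => ∑' Q : S,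
                Set.indicator (Q : Set (Rn n))
                  (fun _ => avg (dualW p1 w1) Q * avg (vweight p p1 p2 w1 w2) Q) x)
              (conj p2) (dualW p2 w2) ≤
            C * APconst p p1 p2 w1 w2 ^ (1 / p) *
              (∑' Q : S,
                avg (dualW p1 w1) (Q : Set (Rn n)) ^ (conj p2 / p1) *
                  avg (vweight p p1 p2 w1 w2) (Q : Set (Rn n)) ^ (conj p2 / conj p) *
                  volume (Q : Set (Rn n))) ^ (1 / conj p2) := by
  obtain ⟨C, hC, bound⟩ := statement7_general p p1 p2 hp1 hp2 hp hp0 (Λ := 2) ofNat_ne_top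
  refine ⟨C, hC, fun w1 w2 _ hw2 hA S hSc hcube hlam hS => ?_⟩
  have sparse := hS.isSparseFamily hcube (by simpa only [IsLaminar, disjoint_iff_inter_eq_empty])
  have := hSc.to_subtype
  rw [lpNorm_eq_lintegral_withDensity (Measurable.tsum fun Q : S =>
    measurable_const.indicator (sparse.measurableSet Q Q.2)) (hw2.measurable_dualW p2)]
  simp only [avg_eq_relAverage]
  refine bound _ _ _ _ _ hA S hSc sparse fun Q hQ => ?_
  simpa only [avg_eq_relAverage] using le_APconst p p1 p2 w1 w2 (hcube Q hQ)
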